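/- Let G be a finite group with T(G) ≤ 2·k(G), where T(G) is the sum of the degrees of the complex irreducible characters of G and k(G) is the number of conjugacy classes of G. Then T₂(G) ≤ 3·|G : G'|, where T₂(G) is the sum of the degrees of those irreducible characters of G of degree strictly greater than 2 and G' is the derived subgroup of G. -/

import Mathlib

/-- `χ : G → ℂ` is an irreducible complex character of the group `G`, i.e. the character
of a simple (irreducible) finite-dimensional complex representation of `G`. -/
def IsIrrChar (G : Type) [Group G] (χ : G → ℂ) : Prop :=
  ∃ V : FDRep ℂ G, CategoryTheory.Simple V ∧ χ = V.character

/-- `T(G)`: the sum of the degrees (values at the identity) of the complex irreducible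
characters of `G`. -/
noncomputable def charDegreeSum (G : Type) [Group G] : ℝ :=
  ∑ᶠ χ ∈ {χ : G → ℂ | IsIrrChar G χ}, (χ 1).re

/-- `T₂(G)`: the sum of the degrees of the complex irreducible characters of `G` of degree
strictly greater than `2`. -/
noncomputable def charDegreeSumGtTwo (G : Type) [Group G] : ℝ :=
  ∑ᶠ χ ∈ {χ : G → ℂ | IsIrrChar G χ ∧ 2 < (χ 1).re}, (χ 1).re

/-!
Count each irreducible character `χ` of degree `d` with weight `3 d + 3 [d = 1] - d [d > 2] - 6`.
The weight vanishes for `d = 1` and `d = 2`, and equals `2 d - 6 ≥ 0` for `d ≥ 3`. Summing over all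
irreducible characters gives `T₂(G) + 6 |Irr(G)| ≤ 3 T(G) + 3 |{χ ∈ Irr(G) : χ(1) = 1}|`.

Linear characters are homomorphisms `G → ℂˣ`, and there are `|G : G'|` of these. Moreover
`k(G) ≤ |Irr(G)|`, because a class function `f` orthogonal to every irreducible character vanishes:
the central element `∑ f(g) g⁻¹` of the group algebra acts on each simple module by a scalar, whose
trace is the pairing of `f` with the character, so it acts as zero; by semisimplicity it is zero.
-/

open CategoryTheory Module Representation
open scoped MonoidAlgebra

theorem eq_zero_of_forall_isSimpleModule_smul_eq_zero {R : Type*} [Ring R] [IsSemisimpleRing R]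
    {r : R} (hr : ∀ (I : Ideal R) [IsSimpleModule R (R ⧸ I)] (m : R ⧸ I), r • m = 0) : r = 0 := by
  suffices r ∈ Ring.jacobson R by rwa [IsSemisimpleRing.jacobson_eq_bot] at this
  rw [Ring.jacobson_eq_sInf_isMaximal, Ideal.mem_sInf]
  intro I (hI : I.IsMaximal)
  have : IsSimpleModule R (R ⧸ I) := isSimpleModule_iff_isCoatom.2 hI.out
  have hr_one := hr I (Submodule.Quotient.mk 1)
  rwa [← Submodule.Quotient.mk_smul, Submodule.Quotient.mk_eq_zero, smul_eq_mul, mul_one]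
    at hr_one

/-- A class function: a function on a group that is invariant under conjugation. -/
def IsClassFunction {G α : Type*} [Group G] (f : G → α) : Prop :=
  ∀ g h, f (h * g * h⁻¹) = f g

theorem isClassFunction_comp_conjClasses_mk {G α : Type*} [Group G] (f : ConjClasses G → α) :
    IsClassFunction fun g ↦ f (ConjClasses.mk g) := fun _ h ↦
  congrArg f (ConjClasses.mk_eq_mk_iff_isConj.2 (isConj_iff.2 ⟨h, rfl⟩).symm)

section GroupAlgebra

variable {k G : Type*} [CommSemiring k] [Group G] [Fintype G]

variable (k G) in
/-- The pairing `(φ, ψ) ↦ ∑ g, φ g * ψ g⁻¹` on functions `G → k`, for which distinct irreducible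
characters are orthogonal. It is not divided by `|G|`, so that it makes sense over any `k`. -/
noncomputable def characterPairing : LinearMap.BilinForm k (G → k) :=
  (dotProductBilin k k).compl₂ (LinearMap.funLeft k k (·⁻¹))

theorem characterPairing_apply (φ ψ : G → k) :
    characterPairing k G φ ψ = ∑ g, φ g * ψ g⁻¹ := rfl

/-- The element `∑ f(g) g⁻¹` of the group algebra. The inverse makes its trace on a representation
with character `χ` equal to `characterPairing k G f χ`. -/
noncomputable def invWeightedSum (f : G → k) : k[G] :=
  ∑ g, MonoidAlgebra.single g⁻¹ (f g)

theorem coeff_invWeightedSum (f : G → k) (g : G) : (invWeightedSum f).coeff g⁻¹ = f g := by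
  classical
  simp [invWeightedSum, Finsupp.single_apply]

theorem IsClassFunction.invWeightedSum_mem_center {f : G → k} (hf : IsClassFunction f) :
    invWeightedSum f ∈ Submonoid.center k[G] := by
  have commute_of (h : G) : MonoidAlgebra.of k G h * invWeightedSum f =
      invWeightedSum f * MonoidAlgebra.of k G h := by
    simp only [invWeightedSum, Finset.mul_sum, Finset.sum_mul]
    exact Fintype.sum_equiv (MulAut.conj h).toEquiv _ _ fun g ↦ by
      simp [hf g h, ← mul_assoc, -conj_mul]
  refine Submonoid.mem_center_iff.2 fun a ↦ ?_
  induction a using MonoidAlgebra.induction_on with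
  | of h => exact commute_of h
  | add a b ha hb => rw [add_mul, mul_add, ha, hb]
  | smul r a ha => rw [smul_mul_assoc, mul_smul_comm, ha]

end GroupAlgebra

theorem trace_asAlgebraHom_invWeightedSum {k G V : Type*} [Field k] [Group G] [Fintype G]
    [AddCommGroup V] [Module k V] (ρ : Representation k G V) (f : G → k) :
    LinearMap.trace k V (ρ.asAlgebraHom (invWeightedSum f)) =
      characterPairing k G f ρ.character := by
  simp [invWeightedSum, characterPairing_apply, character, asAlgebraHom_single]

section Irreducible

variable {k G V : Type*} [Field k] [IsAlgClosed k] [Group G] [AddCommGroup V] [Module k V]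
  [FiniteDimensional k V] (ρ : Representation k G V) [ρ.IsIrreducible]

theorem exists_asAlgebraHom_eq_smul_one_of_mem_center {z : k[G]}
    (hz : z ∈ Submonoid.center k[G]) : ∃ c : k, ρ.asAlgebraHom z = c • 1 := by
  obtain ⟨c, hc⟩ := (IsIrreducible.algebraMap_intertwiningMap_bijective_of_isAlgClosed
    (ρ := ρ)).surjective (IntertwiningMap.centralAlgebraMul ρ hz)
  exact ⟨c, (congrArg IntertwiningMap.toLinearMap hc).symm⟩

theorem IsClassFunction.exists_asAlgebraHom_invWeightedSum_eq_smul_one [Fintype G]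
    {f : G → k} (hf : IsClassFunction f) :
    ∃ c : k, ρ.asAlgebraHom (invWeightedSum f) = c • 1 ∧
      characterPairing k G f ρ.character = c * finrank k V := by
  obtain ⟨c, hc⟩ := exists_asAlgebraHom_eq_smul_one_of_mem_center ρ hf.invWeightedSum_mem_center
  refine ⟨c, hc, ?_⟩
  rw [← trace_asAlgebraHom_invWeightedSum, hc, map_smul, LinearMap.trace_one, smul_eq_mul]

variable [NeZero (Nat.card G : k)]

theorem characterPairing_character_self [Fintype G] :
    characterPairing k G ρ.character ρ.character = Nat.card G := by
  have hcard : (Nat.card G : k) ≠ 0 := NeZero.ne _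
  have := invertibleOfNonzero hcard
  have h := char_orthonormal ρ ρ
  rwa [if_pos ⟨Representation.Equiv.refl ρ⟩, inv_mul_eq_one₀ hcard, eq_comm] at h

include ρ in
theorem natCast_finrank_ne_zero_of_isIrreducible : (finrank k V : k) ≠ 0 := by
  have : NeZero (Nat.card G) := .of_map (Nat.castRingHom k)
  have := Nat.finite_of_card_ne_zero (NeZero.ne (Nat.card G))
  have := Fintype.ofFinite G
  obtain ⟨c, -, hc⟩ := IsClassFunction.exists_asAlgebraHom_invWeightedSum_eq_smul_one ρ
    (f := ρ.character) fun g h ↦ char_conj ρ g h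
  rw [characterPairing_character_self] at hc
  exact right_ne_zero_of_mul (hc.symm.trans_ne (NeZero.ne (Nat.card G : k)))

theorem IsClassFunction.asAlgebraHom_invWeightedSum_eq_zero [Fintype G] {f : G → k}
    (hf : IsClassFunction f) (horth : characterPairing k G f ρ.character = 0) :
    ρ.asAlgebraHom (invWeightedSum f) = 0 := by
  obtain ⟨c, hact, htrace⟩ := hf.exists_asAlgebraHom_invWeightedSum_eq_smul_one ρ
  have hc : c = 0 := (mul_eq_zero.1 (htrace.symm.trans horth)).resolve_right
    (natCast_finrank_ne_zero_of_isIrreducible ρ)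
  rw [hact, hc, zero_smul]

end Irreducible

theorem asAlgebraHom_ofModule'_apply {k G M : Type*} [CommSemiring k] [Monoid G] [AddCommMonoid M]
    [Module k M] [Module k[G] M] [IsScalarTower k k[G] M] (z : k[G]) (m : M) :
    (ofModule' (k := k) (G := G) M).asAlgebraHom z m = z • m :=
  LinearMap.congr_fun (AlgHom.congr_fun
    ((MonoidAlgebra.lift k (End k M) G).apply_symm_apply (Algebra.lsmul k k M)) z) m

theorem isIrreducible_ofModule' {k G M : Type*} [Field k] [Monoid G] [AddCommGroup M] [Module k M]
    [Module k[G] M] [IsScalarTower k k[G] M] [IsSimpleModule k[G] M] :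
    (ofModule' (k := k) (G := G) M).IsIrreducible := by
  let ρ : Representation k G M := ofModule' M
  let e : ρ.asModule ≃ₗ[k[G]] M :=
    { ρ.asModuleEquiv with
      map_smul' := fun z m ↦
        (ρ.asModuleEquiv_map_smul z m).trans (asAlgebraHom_ofModule'_apply z _) }
  exact (irreducible_iff_isSimpleModule_asModule ρ).2 (.congr e)

section Completeness

universe u v

variable {k : Type u} {G : Type v} [Field k] [IsAlgClosed k] [Group G] [Fintype G]
  [NeZero (Nat.card G : k)] {f : G → k}

theorem IsClassFunction.eq_zero_of_forall_characterPairing_eq_zero (hf : IsClassFunction f)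
    (horth : ∀ (V : Type max u v) [AddCommGroup V] [Module k V] [FiniteDimensional k V]
      (ρ : Representation k G V) [ρ.IsIrreducible], characterPairing k G f ρ.character = 0) :
    f = 0 := by
  suffices hzero : invWeightedSum f = 0 by
    funext g
    rw [← coeff_invWeightedSum f g, hzero]
    rfl
  refine eq_zero_of_forall_isSimpleModule_smul_eq_zero fun I _ m ↦ ?_
  have : FiniteDimensional k (k[G] ⧸ I) := Module.Finite.trans k[G] _
  have := isIrreducible_ofModule' (k := k) (G := G) (M := k[G] ⧸ I)
  rw [← asAlgebraHom_ofModule'_apply, hf.asAlgebraHom_invWeightedSum_eq_zero _ (horth _ _),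
    LinearMap.zero_apply]

end Completeness

theorem card_monoidHom_units_eq_index_commutator (G M : Type*) [Group G] [Finite G] [CommMonoid M]
    [HasEnoughRootsOfUnity M (Monoid.exponent (Abelianization G))] :
    Nat.card (G →* Mˣ) = (commutator G).index :=
  (Nat.card_congr Abelianization.lift).trans
    (CommGroup.card_monoidHom_of_hasEnoughRootsOfUnity (Abelianization G) M)

theorem trace_mul_of_finrank_eq_one {R M : Type*} [CommRing R] [StrongRankCondition R]
    [AddCommGroup M] [Module R M] [Module.Free R M] (hM : finrank R M = 1) (a b : End R M) :
    LinearMap.trace R M (a * b) = LinearMap.trace R M a * LinearMap.trace R M b := by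
  have := Module.finite_of_finrank_pos (hM ▸ Nat.one_pos)
  obtain ⟨c, rfl, -⟩ := LinearMap.existsUnique_eq_smul_id_of_finrank_eq_one hM a
  obtain ⟨d, rfl, -⟩ := LinearMap.existsUnique_eq_smul_id_of_finrank_eq_one hM b
  simp [hM, mul_comm, ← End.one_eq_id]

theorem exists_monoidHom_units_coe_eq_character {k G V : Type*} [Field k] [Group G]
    [AddCommGroup V] [Module k V] (ρ : Representation k G V) (hV : finrank k V = 1) :
    ∃ φ : G →* kˣ, ρ.character = fun g ↦ (φ g : k) := by
  have := FiniteDimensional.of_finrank_eq_succ hV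
  let φ : G →* k :=
    { toFun := ρ.character
      map_one' := by simp [hV]
      map_mul' a b := by simp only [character, map_mul, trace_mul_of_finrank_eq_one hV] }
  exact ⟨φ.toHomUnits, rfl⟩

theorem sum_filter_two_lt_add_six_mul_card_le {ι R : Type*} [CommRing R] [LinearOrder R]
    [IsStrictOrderedRing R] {s : Finset ι} {d : ι → R}
    (hd : ∀ i ∈ s, d i = 1 ∨ d i = 2 ∨ 3 ≤ d i) :
    ∑ i ∈ s with 2 < d i, d i + 6 * s.card ≤ 3 * ∑ i ∈ s, d i + 3 * (s.filter (d · = 1)).card := by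
  simp only [Finset.cast_card, Finset.sum_filter, Finset.mul_sum, ← Finset.sum_add_distrib]
  refine Finset.sum_le_sum fun i hi ↦ ?_
  rcases hd i hi with h_one | h_two | h_three
  · norm_num [h_one]
  · norm_num [h_two]
  · split_ifs <;> linarith

namespace IsIrrChar

variable {G : Type} [Group G] {χ ψ : G → ℂ}

theorem of_isIrreducible [Finite G] {V : Type} [AddCommGroup V] [Module ℂ V]
    [FiniteDimensional ℂ V] (ρ : Representation ℂ G V) [ρ.IsIrreducible] :
    IsIrrChar G ρ.character := by
  have := Fintype.ofFinite G
  exact ⟨.of ρ, (FDRep.simple_iff_char_is_norm_one _).2 (characterPairing_character_self ρ), rfl⟩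

theorem characterPairing_self [Fintype G] (hχ : IsIrrChar G χ) :
    characterPairing ℂ G χ χ = Nat.card G := by
  obtain ⟨V, hV, rfl⟩ := hχ
  exact (FDRep.simple_iff_char_is_norm_one V).1 hV

theorem characterPairing_eq_zero [Fintype G] (hχ : IsIrrChar G χ) (hψ : IsIrrChar G ψ)
    (hne : χ ≠ ψ) : characterPairing ℂ G χ ψ = 0 := by
  obtain ⟨V, _, rfl⟩ := hχ
  obtain ⟨W, _, rfl⟩ := hψ
  have hcard : (Nat.card G : ℂ) ≠ 0 := NeZero.ne _
  have := invertibleOfNonzero hcard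
  have h := FDRep.char_orthonormal V W
  rw [if_neg fun ⟨i⟩ ↦ hne (FDRep.char_iso i)] at h
  exact (mul_eq_zero.1 h).resolve_left (inv_ne_zero hcard)

theorem exists_degree_eq_natCast (hχ : IsIrrChar G χ) : ∃ n : ℕ, 0 < n ∧ χ 1 = n := by
  obtain ⟨V, _, rfl⟩ := hχ
  refine ⟨finrank ℂ V, ?_, V.char_one⟩
  rw [pos_iff_ne_zero, Ne, finrank_zero_iff]
  exact fun _ ↦ id_nonzero V (by ext v; exact Subsingleton.elim _ _)

theorem degree_eq_one_or_eq_two_or_three_le (hχ : IsIrrChar G χ) :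
    (χ 1).re = 1 ∨ (χ 1).re = 2 ∨ 3 ≤ (χ 1).re := by
  obtain ⟨n, hn, hdeg⟩ := hχ.exists_degree_eq_natCast
  rw [hdeg, Complex.natCast_re]
  norm_cast
  omega

theorem exists_monoidHom_units_coe_eq (hχ : IsIrrChar G χ) (hdeg : (χ 1).re = 1) :
    ∃ φ : G →* ℂˣ, χ = fun g ↦ (φ g : ℂ) := by
  obtain ⟨V, _, rfl⟩ := hχ
  rw [V.char_one, Complex.natCast_re, Nat.cast_eq_one] at hdeg
  exact exists_monoidHom_units_coe_eq_character V.ρ hdeg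

end IsIrrChar

section Counting

variable (G : Type) [Group G] [Finite G]

theorem linearIndependent_isIrrChar :
    LinearIndependent ℂ ((↑) : {χ : G → ℂ | IsIrrChar G χ} → G → ℂ) := by
  have := Fintype.ofFinite G
  refine LinearMap.BilinForm.linearIndependent_of_iIsOrtho (B := characterPairing ℂ G)
    (fun χ ψ hne ↦ χ.2.characterPairing_eq_zero ψ.2 (Subtype.coe_injective.ne hne)) fun χ ↦ ?_
  rw [χ.2.characterPairing_self]
  exact NeZero.ne _

theorem finite_setOf_isIrrChar : {χ : G → ℂ | IsIrrChar G χ}.Finite :=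
  (linearIndependent_isIrrChar G).finite

theorem card_conjClasses_le_ncard_isIrrChar :
    Nat.card (ConjClasses G) ≤ {χ : G → ℂ | IsIrrChar G χ}.ncard := by
  have := Fintype.ofFinite G
  have := Fintype.ofFinite (ConjClasses G)
  have := (finite_setOf_isIrrChar G).fintype
  let pairings : (ConjClasses G → ℂ) →ₗ[ℂ] ({χ : G → ℂ | IsIrrChar G χ} → ℂ) :=
    .pi fun χ ↦ (characterPairing ℂ G).flip χ ∘ₗ LinearMap.funLeft ℂ ℂ ConjClasses.mk
  have pairings_injective : Function.Injective pairings := by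
    refine (injective_iff_map_eq_zero pairings).2 fun f hf ↦ ?_
    refine LinearMap.funLeft_injective_of_surjective ℂ ℂ _ ConjClasses.mk_surjective ?_
    rw [map_zero]
    exact (isClassFunction_comp_conjClasses_mk f).eq_zero_of_forall_characterPairing_eq_zero
      fun V _ _ _ ρ _ ↦ congrFun hf ⟨ρ.character, .of_isIrreducible ρ⟩
  have hrank := LinearMap.finrank_le_finrank_of_injective pairings_injective
  rwa [finrank_fintype_fun_eq_card, finrank_fintype_fun_eq_card, ← Nat.card_eq_fintype_card,
    ← Nat.card_eq_fintype_card, Nat.card_coe_set_eq] at hrank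

theorem ncard_isIrrChar_degree_one_le_index_commutator :
    {χ : G → ℂ | IsIrrChar G χ ∧ (χ 1).re = 1}.ncard ≤ (commutator G).index := by
  rw [← card_monoidHom_units_eq_index_commutator G ℂ]
  let coeFun (φ : G →* ℂˣ) (g : G) : ℂ := φ g
  calc {χ : G → ℂ | IsIrrChar G χ ∧ (χ 1).re = 1}.ncard
      ≤ (Set.range coeFun).ncard := by
        refine Set.ncard_le_ncard ?_ (Set.finite_range coeFun)
        rintro χ ⟨hχ, hdeg⟩
        obtain ⟨φ, rfl⟩ := hχ.exists_monoidHom_units_coe_eq hdeg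
        exact ⟨φ, rfl⟩
    _ ≤ Nat.card (G →* ℂˣ) := Finite.card_range_le coeFun

end Counting

theorem degree_sum_gt_two_le_three_mul_index_commutator_general (G : Type) [Group G] [Finite G] :
    charDegreeSumGtTwo G + 6 * (Nat.card (ConjClasses G) : ℝ) ≤
      3 * charDegreeSum G + 3 * ((commutator G).index : ℝ) := by
  classical
  have hfin := finite_setOf_isIrrChar G
  let irr := hfin.toFinset
  have hT : charDegreeSum G = ∑ χ ∈ irr, (χ 1).re :=
    finsum_mem_eq_finite_toFinset_sum _ _
  have hT₂ : charDegreeSumGtTwo G = ∑ χ ∈ irr with 2 < (χ 1).re, (χ 1).re :=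
    finsum_mem_eq_sum_of_inter_support_eq _ <| by
      ext
      simp only [irr, Set.mem_inter_iff, Set.mem_ofPred_eq, Finset.mem_coe, Finset.mem_filter,
        Set.Finite.mem_toFinset]
  have hk : (Nat.card (ConjClasses G) : ℝ) ≤ irr.card := by
    rw [← Set.ncard_eq_toFinset_card _ hfin]
    exact_mod_cast card_conjClasses_le_ncard_isIrrChar G
  have hlin : ((irr.filter fun χ ↦ (χ 1).re = 1).card : ℝ) ≤ (commutator G).index := by
    rw [← Set.ncard_coe_finset]
    simpa [irr] using ncard_isIrrChar_degree_one_le_index_commutator G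
  have hsum := sum_filter_two_lt_add_six_mul_card_le (d := fun χ ↦ (χ 1).re)
    fun χ hχ ↦ (hfin.mem_toFinset.1 hχ).degree_eq_one_or_eq_two_or_three_le
  linarith

theorem degree_sum_gt_two_le_three_mul_index_commutator
    (G : Type) [Group G] [Finite G]
    (h : charDegreeSum G ≤ 2 * (Nat.card (ConjClasses G) : ℝ)) :
    charDegreeSumGtTwo G ≤ 3 * ((commutator G).index : ℝ) := by
  linarith [degree_sum_gt_two_le_three_mul_index_commutator_general G]
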